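/- Let (V, p_V) be a DMS on a finite alphabet V, let μ_V = min_{r ∈ supp(p_V)} p_V(r), fix ε₀ > 0, and set δ = 2|V| e^{−n ε₀² μ_V}; assume δ < 1. Enumerate the ε₀-letter-typical set T_{ε₀}^n(V) as v^n(1),…,v^n(|T_{ε₀}^n(V)|), and define the encoder f_n that outputs m if the input equals v^n(m), and outputs an index drawn uniformly at random from {1,…,|T_{ε₀}^n(V)|} (using an independent uniform seed) if the input is not typical. Then for every m, the output distribution satisfies p_{f_n(V^n)}(m) ≤ 2^{−n(1 − ε₀) H(V)} / (1 − δ), and consequently the min-entropy of the encoder output satisfies H_∞(f_n(V^n)) ≥ n(1 − ε₀) H(V) + log(1 − δ). -/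

import Mathlib

open Finset Filter Real

attribute [local instance] Classical.propDecidable

noncomputable section

/-- `p` is a probability mass function on the finite type `α`. -/
def IsPMF {α : Type*} [Fintype α] (p : α → ℝ) : Prop :=
  (∀ a, 0 ≤ p a) ∧ ∑ a, p a = 1

/-- i.i.d. (product) distribution of `n` copies of a source with pmf `p`. -/
def iid {α : Type*} [Fintype α] (p : α → ℝ) (n : ℕ) : (Fin n → α) → ℝ :=
  fun x => ∏ i, p (x i)

/-- variational distance between two pmfs -/
def VD {α : Type*} [Fintype α] (p q : α → ℝ) : ℝ := ∑ a, |p a - q a|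

/-- Shannon entropy, base 2 -/
def Hsh {α : Type*} [Fintype α] (p : α → ℝ) : ℝ := - ∑ a, p a * Real.logb 2 (p a)

/-- Rényi entropy of order 2, base 2 -/
def H2 {α : Type*} [Fintype α] (p : α → ℝ) : ℝ := - Real.logb 2 (∑ a, (p a) ^ 2)

/-- min-entropy, base 2 -/
def Hinf {α : Type*} [Fintype α] (p : α → ℝ) : ℝ := - Real.logb 2 (⨆ a, p a)

/-- Kullback–Leibler divergence, base 2 -/
def KL {α : Type*} [Fintype α] (p q : α → ℝ) : ℝ := ∑ a, p a * Real.logb 2 (p a / q a)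

/-- pushforward of a pmf along a map -/
def push {α β : Type*} [Fintype α] [Fintype β] (p : α → ℝ) (f : α → β) : β → ℝ :=
  fun b => ∑ a, if f a = b then p a else 0

/-- conditional mutual information `I(X;Y|Q)` of a joint pmf on `Q × X × Y`, base 2:
`I(X;Y|Q) = H(Q,X) + H(Q,Y) - H(Q) - H(Q,X,Y)`. -/
def condMI {Q X Y : Type*} [Fintype Q] [Fintype X] [Fintype Y] (p : Q × X × Y → ℝ) : ℝ :=
  Hsh (fun qx : Q × X => ∑ y, p (qx.1, qx.2, y))
    + Hsh (fun qy : Q × Y => ∑ x, p (qy.1, x, qy.2))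
    - Hsh (fun q : Q => ∑ x, ∑ y, p (q, x, y))
    - Hsh p

/-- the set of `ε`-letter-typical sequences of length `n` -/
def typ {α : Type*} [Fintype α] (p : α → ℝ) (n : ℕ) (ε : ℝ) : Finset (Fin n → α) :=
  Finset.univ.filter fun x =>
    ∀ a, |((Finset.univ.filter fun i => x i = a).card : ℝ) / n - p a| ≤ ε * p a

/-- cumulative distribution function of the standard normal distribution -/
def stdΦ (x : ℝ) : ℝ := ∫ t in Set.Iic x, Real.exp (-(t ^ 2) / 2) / Real.sqrt (2 * Real.pi)

/-- `⌈2^r⌉₊`, the size of a message set `{1,…,2^r}` -/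
def e2 (r : ℝ) : ℕ := ⌈(2:ℝ) ^ r⌉₊

/-!
Let `M` be the most likely letter, `k` the number of letters of positive probability, `t a = n p a`
and `x = n ε² μ`. A typical sequence contains every letter `a` at least `(1 - ε) t a` times, and
each of its remaining `ε n` letters has probability at most `p M`, so its probability is at most
`2 ^ (-n (1 - ε) H) * S` with `S = exp (-ε n (1 - p M))`. Averaging over the typical set `T`, the
encoder output is therefore bounded by `2 ^ (-n (1 - ε) H) * S / P[T]`, and `S * (1 - δ) ≤ P[T]`
suffices. The stronger `1 - δ ≤ P[T]` is not available: for a rare letter the deviation probability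
decays only like `exp (-n ε² μ / 2)`.

A single type class inside `T` is heavy enough, namely that of a rounding `N` of `t`. By Stirling's
formula its probability is at least `√(2πn)` times the product of the Poisson weights
`exp (-t a) * t a ^ N a / (N a)!`, each of which is at least `1 / (C √(t a))` with `C = 3 e / 2`. On
the other hand `S` is the product of the `exp (-ε t a) ≤ √x exp (-x) / √(t a)` over `a ≠ M`, and
`C * (C √x exp (-x)) ^ (k - 1) * (1 - 2 k exp (-x)) ≤ √(2π)` closes the comparison. The cases
`1 ≤ ε` and `k = 1` are trivial because then the claimed bound is at least `1`.
-/

lemma neg_logb_two_rpow_neg_div (c : ℝ) {d : ℝ} (hd : d ≠ 0) :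
    -logb 2 ((2 : ℝ) ^ (-c) / d) = c + logb 2 d := by
  rw [logb_div (by positivity) hd, logb_rpow two_pos (by norm_num)]
  ring

lemma rpow_le_exp_neg_mul_one_sub {b c : ℝ} (hb : 0 ≤ b) (hc : 0 ≤ c) :
    b ^ c ≤ exp (-(c * (1 - b))) := by
  calc b ^ c ≤ exp (b - 1) ^ c := by
        gcongr
        linarith [add_one_le_exp (b - 1)]
    _ = exp (-(c * (1 - b))) := by rw [← exp_mul]; ring_nf

lemma mul_exp_neg_le_mul_exp_neg {x y : ℝ} (hx : 1 ≤ x) (hxy : x ≤ y) :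
    y * exp (-y) ≤ x * exp (-x) := by
  have hy : y ≤ x * exp (y - x) := by nlinarith [add_one_le_exp (y - x)]
  calc y * exp (-y) ≤ x * exp (y - x) * exp (-y) := by gcongr
    _ = x * exp (-x) := by rw [mul_assoc, ← exp_add]; ring_nf

lemma sqrt_mul_exp_neg_le {x ε t : ℝ} (hx : 1 ≤ x) (hε : 0 ≤ ε) (hε1 : ε ≤ 1)
    (ht : x ≤ ε ^ 2 * t) : √t * exp (-(ε * t)) ≤ √x * exp (-x) := by
  have ht0 : 0 ≤ t := by nlinarith [sq_nonneg ε]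
  have hxt : x ≤ ε * t := by nlinarith [mul_nonneg hε ht0]
  have hsqrt : √x * √t ≤ ε * t := by
    rw [← sqrt_mul (by linarith)]
    exact sqrt_le_iff.mpr ⟨by positivity, by nlinarith⟩
  refine le_of_mul_le_mul_left ?_ (sqrt_pos.mpr (by linarith : 0 < x))
  calc √x * (√t * exp (-(ε * t))) = √x * √t * exp (-(ε * t)) := by ring
    _ ≤ ε * t * exp (-(ε * t)) := by gcongr
    _ ≤ x * exp (-x) := mul_exp_neg_le_mul_exp_neg hx hxt
    _ = √x * (√x * exp (-x)) := by rw [← mul_assoc, mul_self_sqrt (by linarith)]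

lemma log_four_lt_of_four_mul_exp_neg_lt_one {x : ℝ} (h : 4 * exp (-x) < 1) : log 4 < x := by
  rw [log_lt_iff_lt_exp (by norm_num)]
  rwa [exp_neg, ← div_eq_mul_inv, div_lt_one (exp_pos x)] at h

lemma log_four_eq_two_mul_log_two : log 4 = 2 * log 2 := by
  rw [show (4 : ℝ) = 2 ^ 2 by norm_num, log_pow, Nat.cast_ofNat]

lemma four_thirds_lt_log_four : 4 / 3 < log 4 := by
  rw [log_four_eq_two_mul_log_two]; linarith [log_two_gt_d9]

lemma exp_one_sq_lt : exp 1 ^ 2 < 7.39 := by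
  nlinarith [exp_one_lt_d9, exp_pos 1]

lemma sq_mul_sqrt_mul_exp_neg_le {x : ℝ} (h : 4 * exp (-x) < 1) :
    (3 / 2 * exp 1 * (√x * exp (-x))) ^ 2 ≤ 6 * exp (-x) := by
  have hx := log_four_lt_of_four_mul_exp_neg_lt_one h
  have hlog : 1 ≤ log 4 := by linarith [four_thirds_lt_log_four]
  have hpeak : x * exp (-x) ≤ 0.347 := by
    refine (mul_exp_neg_le_mul_exp_neg hlog hx.le).trans ?_
    rw [exp_neg, exp_log (by norm_num), log_four_eq_two_mul_log_two]
    linarith [log_two_lt_d9]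
  have hx0 : 0 ≤ x := by linarith
  calc (3 / 2 * exp 1 * (√x * exp (-x))) ^ 2
      = 9 / 4 * exp 1 ^ 2 * (x * exp (-x)) * exp (-x) := by
        rw [mul_pow, mul_pow, mul_pow, sq_sqrt hx0]; ring
    _ ≤ 9 / 4 * 7.39 * 0.347 * exp (-x) := by
        gcongr
        exact exp_one_sq_lt.le
    _ ≤ 6 * exp (-x) := by gcongr; norm_num

lemma mul_pow_mul_one_sub_le_sqrt_two_pi {k : ℕ} {x : ℝ} (hk : 2 ≤ k)
    (hδ : 2 * k * exp (-x) < 1) :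
    3 / 2 * exp 1 * (3 / 2 * exp 1 * (√x * exp (-x))) ^ (k - 1) * (1 - 2 * k * exp (-x))
      ≤ √(2 * π) := by
  set u := exp (-x)
  set r := 3 / 2 * exp 1 * (√x * u)
  have hu : 0 < u := exp_pos _
  have hr : 0 ≤ r := by positivity
  have hk' : (2 : ℝ) ≤ k := by exact_mod_cast hk
  have h4 : 4 * u ≤ 2 * k * u := by gcongr; linarith
  have hr_sq : r ^ 2 ≤ 6 * u := sq_mul_sqrt_mul_exp_neg_le (by linarith)
  have hpow : r ^ (k - 1) ≤ r := by
    obtain rfl | hk3 := hk.eq_or_lt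
    · simp
    · have hk3' : (3 : ℝ) ≤ k := by exact_mod_cast hk3
      exact pow_le_of_le_one hr (by nlinarith) (by lia)
  have hcubic : u * (1 - 4 * u) ^ 2 ≤ 1 / 27 := by
    nlinarith [mul_nonneg (show 0 ≤ 4 / 3 - 4 * u by linarith) (sq_nonneg (12 * u - 1))]
  calc 3 / 2 * exp 1 * r ^ (k - 1) * (1 - 2 * k * u)
      ≤ 3 / 2 * exp 1 * r * (1 - 4 * u) := by
        gcongr
    _ ≤ √(2 * π) := le_sqrt_of_sq_le ?_
  calc (3 / 2 * exp 1 * r * (1 - 4 * u)) ^ 2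
      = 9 / 4 * exp 1 ^ 2 * r ^ 2 * (1 - 4 * u) ^ 2 := by ring
    _ ≤ 9 / 4 * 7.39 * (6 * u) * (1 - 4 * u) ^ 2 := by gcongr; exact exp_one_sq_lt.le
    _ ≤ 2 * π := by nlinarith [pi_gt_three]

open scoped Nat in
lemma factorial_le_exp_one_mul_sqrt_mul_pow {m : ℕ} (hm : m ≠ 0) :
    (m ! : ℝ) ≤ exp 1 * √m * (m / exp 1) ^ m := by
  obtain ⟨j, rfl⟩ := Nat.exists_eq_succ_of_ne_zero hm
  have h : Stirling.stirlingSeq (j + 1) ≤ exp 1 / √2 :=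
    Stirling.stirlingSeq_one ▸ Stirling.stirlingSeq'_antitone (Nat.zero_le j)
  rw [Stirling.stirlingSeq, div_le_iff₀ (by positivity), sqrt_mul zero_le_two] at h
  refine h.trans_eq ?_
  field_simp

lemma sub_le_mul_log_div {m t : ℝ} (hm : 0 < m) (hmt : m ≤ t) (htm : t ≤ m + 1) :
    t - m ≤ (m + 1 / 2) * log (t / m) := by
  have hlog : 2 * (t - m) / (t + m) ≤ log (t / m) := by
    have h := le_log_one_add_of_nonneg (x := (t - m) / m) (div_nonneg (by linarith) hm.le)
    convert h using 1
    · field_simp; ring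
    · congr 1; field_simp; ring
  calc t - m ≤ (m + 1 / 2) * (2 * (t - m) / (t + m)) := by
        rw [← mul_div_assoc, le_div_iff₀ (by linarith)]; nlinarith
    _ ≤ (m + 1 / 2) * log (t / m) := by gcongr

open scoped Nat in
lemma one_div_le_poisson_floor {t : ℝ} (ht : 1 ≤ t) :
    1 / (exp 1 * √t) ≤ exp (-t) * t ^ ⌊t⌋₊ / ⌊t⌋₊ ! := by
  set m := ⌊t⌋₊
  have hm : m ≠ 0 := (Nat.floor_pos.mpr ht).ne'
  have hm0 : (0 : ℝ) < m := by positivity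
  have ht0 : 0 < t := by linarith
  have hmt : (m : ℝ) ≤ t := Nat.floor_le ht0.le
  have hgrow : √m * m ^ m * exp (-m) ≤ √t * t ^ m * exp (-t) := by
    have h := exp_le_exp.mpr (sub_le_mul_log_div hm0 hmt (Nat.lt_floor_add_one t).le)
    have hpow (s : ℝ) (hs : 0 < s) : √s * s ^ m = exp ((m + 1 / 2) * log s) := by
      rw [add_mul, exp_add, exp_nat_mul, exp_log hs, sqrt_eq_rpow, rpow_def_of_pos hs]
      ring_nf
    rw [hpow _ hm0, hpow _ ht0, ← exp_add, ← exp_add, exp_le_exp]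
    rw [exp_le_exp, log_div ht0.ne' hm0.ne'] at h
    linarith
  rw [div_le_div_iff₀ (by positivity) (by positivity), one_mul]
  calc (m ! : ℝ) ≤ exp 1 * √m * (m / exp 1) ^ m := factorial_le_exp_one_mul_sqrt_mul_pow hm
    _ = exp 1 * (√m * m ^ m * exp (-m)) := by
        rw [div_pow, ← exp_nat_mul, mul_one, exp_neg]; ring
    _ ≤ exp 1 * (√t * t ^ m * exp (-t)) := by gcongr
    _ = exp (-t) * t ^ m * (exp 1 * √t) := by ring

open scoped Nat in
lemma one_div_le_poisson {t : ℝ} {m : ℕ} (ht : 4 / 3 ≤ t)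
    (hm : m = ⌊t⌋₊ ∨ m = ⌊t⌋₊ + 1) :
    1 / (3 / 2 * exp 1 * √t) ≤ exp (-t) * t ^ m / m ! := by
  have hfloor := one_div_le_poisson_floor (t := t) (by linarith)
  have hC : 1 / (3 / 2 * exp 1 * √t) = 2 / 3 * (1 / (exp 1 * √t)) := by field_simp
  have hpos : 0 < 1 / (exp 1 * √t) := by positivity
  rw [hC]
  obtain rfl | rfl := hm
  · linarith
  · have hratio : 2 / 3 ≤ t / (⌊t⌋₊ + 1) := by
      rw [div_le_div_iff₀ (by norm_num) (by positivity)]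
      have hft := Nat.floor_le (show 0 ≤ t by linarith)
      obtain h | h : ⌊t⌋₊ ≤ 1 ∨ 2 ≤ ⌊t⌋₊ := by lia
      · have : (⌊t⌋₊ : ℝ) ≤ 1 := by exact_mod_cast h
        linarith
      · have : (2 : ℝ) ≤ ⌊t⌋₊ := by exact_mod_cast h
        linarith
    calc 2 / 3 * (1 / (exp 1 * √t))
        ≤ t / (⌊t⌋₊ + 1) * (exp (-t) * t ^ ⌊t⌋₊ / ⌊t⌋₊ !) := by gcongr
      _ = exp (-t) * t ^ (⌊t⌋₊ + 1) / (⌊t⌋₊ + 1)! := by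
          rw [Nat.factorial_succ, pow_succ]; push_cast; field_simp

section LetterCount

variable {α : Type*} {n : ℕ}

/-- The number `N(a | v)` of occurrences of the letter `a` in the sequence `v`. -/
def letterCount (v : Fin n → α) (a : α) : ℕ := #{i | v i = a}

lemma letterCount_comp_perm (v : Fin n → α) (σ : Equiv.Perm (Fin n)) :
    letterCount (v ∘ σ) = letterCount v := by
  funext a
  exact card_equiv σ (by simp)

variable [Fintype α]

lemma sum_letterCount (v : Fin n → α) : ∑ a, letterCount v a = n := by
  simpa [letterCount] using sum_card_fiberwise_eq_card_filter univ univ v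

lemma iid_eq_prod_pow_letterCount (p : α → ℝ) (v : Fin n → α) :
    iid p n v = ∏ a, p a ^ letterCount v a := by
  simp only [iid, letterCount, ← prod_fiberwise' univ v p, prod_const]

lemma exists_letterCount_eq {N : α → ℕ} (hN : ∑ a, N a = n) :
    ∃ v : Fin n → α, letterCount v = N := by
  let φ : Fin n ≃ Σ a, Fin (N a) := Fintype.equivOfCardEq (by simp [hN])
  refine ⟨fun i => (φ i).1, funext fun a => ?_⟩
  calc letterCount (fun i => (φ i).1) a = #{s : Σ a, Fin (N a) | s.1 = a} :=
        card_equiv φ (by simp)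
    _ = N a := by
        rw [← Fintype.card_subtype, Fintype.card_congr (Equiv.sigmaSubtype a), Fintype.card_fin]

/-- The type class `{v : Fin n → α | N(a | v) = N a for every letter a}`. -/
def typeClass (n : ℕ) (N : α → ℕ) : Finset (Fin n → α) := {v | letterCount v = N}

lemma mem_typeClass {N : α → ℕ} {v : Fin n → α} : v ∈ typeClass n N ↔ letterCount v = N := by
  simp [typeClass]

open scoped Nat in
lemma card_perm_comp_eq_le (v w : Fin n → α) :
    #{σ : Equiv.Perm (Fin n) | v ∘ σ = w} ≤ ∏ a, (letterCount v a)! := by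
  obtain h | ⟨τ, hτ⟩ := ({σ : Equiv.Perm (Fin n) | v ∘ σ = w} : Finset _).eq_empty_or_nonempty
  · simp [h]
  simp only [mem_filter, mem_univ, true_and] at hτ
  subst hτ
  refine le_of_eq ?_
  calc #{σ : Equiv.Perm (Fin n) | v ∘ σ = v ∘ τ}
      = #{σ : Equiv.Perm (Fin n) | v ∘ σ = v} :=
        card_equiv (Equiv.mulRight τ⁻¹) fun σ => by
          simp only [mem_filter, mem_univ, true_and]
          exact (τ.comp_symm_eq v (v ∘ σ)).symm
    _ = ∏ a, (letterCount v a)! := by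
        rw [← Fintype.card_subtype, DomMulAct.stabilizer_card]
        simp only [letterCount, Fintype.card_subtype]

open scoped Nat in
lemma factorial_le_card_typeClass_mul {N : α → ℕ} (hN : ∑ a, N a = n) :
    n ! ≤ #(typeClass n N) * ∏ a, (N a)! := by
  obtain ⟨v, rfl⟩ := exists_letterCount_eq hN
  calc n ! = #(univ : Finset (Equiv.Perm (Fin n))) := by
        rw [card_univ, Fintype.card_perm, Fintype.card_fin]
    _ ≤ (∏ a, (letterCount v a)!) * #(univ.image fun σ : Equiv.Perm (Fin n) => v ∘ σ) :=
        card_le_mul_card_image _ _ fun w _ => card_perm_comp_eq_le v w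
    _ ≤ #(typeClass n (letterCount v)) * ∏ a, (letterCount v a)! := by
        rw [mul_comm]
        gcongr
        simp [subset_iff, mem_typeClass, letterCount_comp_perm]

lemma sum_typeClass_iid (p : α → ℝ) (N : α → ℕ) :
    ∑ v ∈ typeClass n N, iid p n v = #(typeClass n N) * ∏ a, p a ^ N a := by
  rw [← nsmul_eq_mul, ← sum_const]
  refine sum_congr rfl fun v hv => ?_
  rw [iid_eq_prod_pow_letterCount, mem_typeClass.mp hv]

open scoped Nat in
lemma sqrt_mul_prod_poisson_le_sum_typeClass {p : α → ℝ} (hp : IsPMF p) {N : α → ℕ}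
    (hN : ∑ a, N a = n) :
    √(2 * π * n) * ∏ a, (exp (-(n * p a)) * (n * p a) ^ N a / (N a)!)
      ≤ ∑ v ∈ typeClass n N, iid p n v := by
  have hfact : (0 : ℝ) < ∏ a, ((N a)! : ℝ) := by positivity
  have hp_pow : 0 ≤ ∏ a, p a ^ N a := prod_nonneg fun a _ => pow_nonneg (hp.1 a) _
  have hpoisson : ∏ a, (exp (-(n * p a)) * (n * p a) ^ N a / (N a)!)
      = (n / exp 1) ^ n * (∏ a, p a ^ N a) / ∏ a, ((N a)! : ℝ) := by
    simp only [prod_div_distrib, prod_mul_distrib, mul_pow, ← exp_sum, sum_neg_distrib,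
      ← mul_sum, hp.2, prod_pow_eq_pow_sum, hN]
    rw [div_pow, ← exp_nat_mul, exp_neg]
    ring
  have hcard : (n ! : ℝ) ≤ #(typeClass n N) * ∏ a, ((N a)! : ℝ) := by
    exact_mod_cast factorial_le_card_typeClass_mul hN
  rw [hpoisson, sum_typeClass_iid, ← mul_div_assoc, div_le_iff₀ hfact]
  calc √(2 * π * n) * ((n / exp 1) ^ n * ∏ a, p a ^ N a)
      = √(2 * π * n) * (n / exp 1) ^ n * ∏ a, p a ^ N a := by ring
    _ ≤ #(typeClass n N) * (∏ a, ((N a)! : ℝ)) * ∏ a, p a ^ N a := by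
        gcongr ?_ * _
        exact (Stirling.le_factorial_stirling n).trans hcard
    _ = #(typeClass n N) * (∏ a, p a ^ N a) * ∏ a, ((N a)! : ℝ) := by ring

end LetterCount

lemma exists_nat_rounding {ι : Type*} (s : Finset ι) {t : ι → ℝ} (ht : ∀ i ∈ s, 0 ≤ t i) {n : ℕ}
    (hsum : ∑ i ∈ s, t i = n) :
    ∃ N : ι → ℕ, ∑ i ∈ s, N i = n ∧ (∀ i ∈ s, N i = ⌊t i⌋₊ ∨ N i = ⌊t i⌋₊ + 1) ∧
      ∀ i ∉ s, N i = 0 := by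
  have hlow : ∑ i ∈ s, ⌊t i⌋₊ ≤ n := by
    rw [← Nat.cast_le (α := ℝ), Nat.cast_sum, ← hsum]
    exact sum_le_sum fun i hi => Nat.floor_le (ht i hi)
  have hhigh : n ≤ ∑ i ∈ s, ⌊t i⌋₊ + #s := by
    rw [← Nat.cast_le (α := ℝ), ← hsum, card_eq_sum_ones, ← sum_add_distrib, Nat.cast_sum]
    exact sum_le_sum fun i _ => by exact_mod_cast (Nat.lt_floor_add_one (t i)).le
  obtain ⟨J, hJs, hJ⟩ := exists_subset_card_eq (show n - ∑ i ∈ s, ⌊t i⌋₊ ≤ #s by lia)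
  refine ⟨fun i => if i ∈ s then ⌊t i⌋₊ + (if i ∈ J then 1 else 0) else 0, ?_, ?_, ?_⟩
  · rw [sum_congr rfl fun i hi => if_pos hi, sum_add_distrib, sum_boole, filter_mem_eq_inter,
      inter_eq_right.mpr hJs, hJ, Nat.cast_id]
    lia
  · intro i hi
    by_cases hiJ : i ∈ J <;> simp [hi, hiJ]
  · intro i hi
    exact if_neg hi

section Source

variable {α : Type*} [Fintype α] {p : α → ℝ}

/-- The support of `p` as a finset. -/
def pmfSupport (p : α → ℝ) : Finset α := {a | 0 < p a}

lemma mem_pmfSupport {a : α} : a ∈ pmfSupport p ↔ 0 < p a := by simp [pmfSupport]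

lemma sInf_pos_le_of_mem_pmfSupport {a : α} (ha : a ∈ pmfSupport p) :
    sInf {r : ℝ | ∃ v, 0 < p v ∧ r = p v} ≤ p a :=
  csInf_le ⟨0, by rintro r ⟨v, hv, rfl⟩; exact hv.le⟩ ⟨a, mem_pmfSupport.mp ha, rfl⟩

namespace IsPMF

lemma iid (hp : IsPMF p) (n : ℕ) : IsPMF (iid p n) := by
  refine ⟨fun v => prod_nonneg fun i _ => hp.1 (v i), ?_⟩
  simp only [_root_.iid]
  rw [← Fintype.sum_pow, hp.2, one_pow]

lemma apply_le_one (hp : IsPMF p) (a : α) : p a ≤ 1 :=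
  hp.2 ▸ single_le_sum (fun b _ => hp.1 b) (mem_univ a)

lemma eq_zero_of_notMem_pmfSupport (hp : IsPMF p) {a : α} (ha : a ∉ pmfSupport p) : p a = 0 :=
  le_antisymm (not_lt.mp (mem_pmfSupport.not.mp ha)) (hp.1 a)

lemma sum_pmfSupport (hp : IsPMF p) : ∑ a ∈ pmfSupport p, p a = 1 :=
  hp.2 ▸ sum_subset (subset_univ _) fun _ _ ha => hp.eq_zero_of_notMem_pmfSupport ha

lemma pmfSupport_nonempty (hp : IsPMF p) : (pmfSupport p).Nonempty :=
  nonempty_of_sum_ne_zero (hp.sum_pmfSupport ▸ one_ne_zero)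

lemma exists_mem_pmfSupport_forall_le (hp : IsPMF p) : ∃ M ∈ pmfSupport p, ∀ a, p a ≤ p M := by
  obtain ⟨b, hb⟩ := hp.pmfSupport_nonempty
  obtain ⟨M, -, hM⟩ := exists_max_image univ p ⟨b, mem_univ b⟩
  exact ⟨M, mem_pmfSupport.mpr ((mem_pmfSupport.mp hb).trans_le (hM b (mem_univ b))),
    fun a => hM a (mem_univ a)⟩

lemma Hsh_nonneg (hp : IsPMF p) : 0 ≤ Hsh p :=
  neg_nonneg.mpr <| sum_nonpos fun a _ => mul_nonpos_of_nonneg_of_nonpos (hp.1 a) <|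
    logb_nonpos one_lt_two (hp.1 a) (hp.apply_le_one a)

lemma Hsh_eq_zero_of_card_pmfSupport_le_one (hp : IsPMF p) (h : #(pmfSupport p) ≤ 1) :
    Hsh p = 0 := by
  refine neg_eq_zero.mpr (sum_eq_zero fun a _ => ?_)
  by_cases ha : a ∈ pmfSupport p
  · have hsupp : pmfSupport p = {a} := eq_singleton_iff_unique_mem.mpr
      ⟨ha, fun b hb => card_le_one.mp h b hb a ha⟩
    have hone : p a = 1 := by simpa [hsupp] using hp.sum_pmfSupport
    simp [hone]
  · simp [hp.eq_zero_of_notMem_pmfSupport ha]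

lemma exists_pos (hp : IsPMF p) : ∃ a, 0 < p a :=
  hp.pmfSupport_nonempty.imp fun _ => mem_pmfSupport.mp

lemma neg_logb_le_Hinf (hp : IsPMF p) {b : ℝ} (hb : ∀ a, p a ≤ b) : -logb 2 b ≤ Hinf p := by
  obtain ⟨a, ha⟩ := hp.exists_pos
  have : Nonempty α := ⟨a⟩
  have hsup : 0 < ⨆ a, p a := ha.trans_le (le_ciSup (Set.finite_range p).bddAbove a)
  exact neg_le_neg (logb_le_logb_of_le one_lt_two hsup (ciSup_le hb))

end IsPMF

lemma two_rpow_neg_mul_Hsh (hp : ∀ a, 0 ≤ p a) (c : ℝ) :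
    (2 : ℝ) ^ (-(c * Hsh p)) = ∏ a, p a ^ (c * p a) := by
  have hexp : -(c * Hsh p) = ∑ a, logb 2 (p a) * (c * p a) := by
    rw [Hsh, mul_neg, neg_neg, mul_sum]
    exact sum_congr rfl fun a _ => by ring
  rw [hexp, rpow_sum_of_pos two_pos]
  refine prod_congr rfl fun a _ => ?_
  obtain ha | ha := (hp a).eq_or_lt
  · simp [← ha]
  · rw [rpow_mul zero_le_two, rpow_logb two_pos (by norm_num) ha]

variable {n : ℕ} {ε : ℝ}

lemma mem_typ_iff (hn : n ≠ 0) {v : Fin n → α} :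
    v ∈ typ p n ε ↔ ∀ a, |(letterCount v a : ℝ) - n * p a| ≤ ε * (n * p a) := by
  have hn' : (0 : ℝ) < n := by positivity
  simp only [typ, mem_filter, mem_univ, true_and, letterCount]
  refine forall_congr' fun a => ?_
  rw [← mul_le_mul_iff_right₀ hn', ← abs_of_pos hn', ← abs_mul, abs_of_pos hn', mul_sub,
    mul_div_cancel₀ _ hn'.ne', mul_left_comm]

lemma typeClass_subset_typ (hn : n ≠ 0) {N : α → ℕ}
    (hN : ∀ a, |(N a : ℝ) - n * p a| ≤ ε * (n * p a)) : typeClass n N ⊆ typ p n ε := by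
  intro v hv
  rwa [mem_typ_iff hn, mem_typeClass.mp hv]

lemma iid_le_of_mem_typ (hp : IsPMF p) (hn : n ≠ 0) (hε : ε ≤ 1) {b : ℝ} (hb : ∀ a, p a ≤ b)
    {v : Fin n → α} (hv : v ∈ typ p n ε) :
    iid p n v ≤ (2 : ℝ) ^ (-(n * (1 - ε) * Hsh p)) * b ^ (ε * n) := by
  rw [mem_typ_iff hn] at hv
  let excess (a : α) : ℝ := letterCount v a - n * (1 - ε) * p a
  have hexcess (a : α) : 0 ≤ excess a := by
    simp only [excess]
    linarith [(abs_le.mp (hv a)).1]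
  have hbase (a : α) : 0 ≤ n * (1 - ε) * p a :=
    mul_nonneg (mul_nonneg n.cast_nonneg (by linarith)) (hp.1 a)
  have hsum : ∑ a, excess a = ε * n := by
    have hcount : ∑ a, (letterCount v a : ℝ) = n := by exact_mod_cast sum_letterCount v
    simp only [excess, sum_sub_distrib, hcount, ← mul_sum, hp.2]
    ring
  obtain ⟨a₀, -⟩ := hp.exists_pos
  have hb0 : 0 ≤ b := (hp.1 a₀).trans (hb a₀)
  calc iid p n v = ∏ a, p a ^ (n * (1 - ε) * p a) * p a ^ excess a := by
        rw [iid_eq_prod_pow_letterCount]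
        refine prod_congr rfl fun a _ => ?_
        rw [← rpow_add_of_nonneg (hp.1 a) (hbase a) (hexcess a), add_sub_cancel, rpow_natCast]
    _ ≤ ∏ a, p a ^ (n * (1 - ε) * p a) * b ^ excess a := by
        gcongr with a
        · exact fun a _ => mul_nonneg (rpow_nonneg (hp.1 a) _) (rpow_nonneg (hp.1 a) _)
        · exact rpow_nonneg (hp.1 a) _
        · exact hp.1 a
        · exact hexcess a
        · exact hb a
    _ = (2 : ℝ) ^ (-(n * (1 - ε) * Hsh p)) * b ^ (ε * n) := by
        rw [prod_mul_distrib, ← two_rpow_neg_mul_Hsh hp.1,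
          ← rpow_sum_of_nonneg hb0 fun a _ => hexcess a, hsum]

lemma exp_neg_mul_one_sub_eq_prod (hp : IsPMF p) {M : α} (hM : M ∈ pmfSupport p) (c : ℝ) :
    exp (-(c * (1 - p M))) = ∏ a ∈ (pmfSupport p).erase M, exp (-(c * p a)) := by
  rw [← hp.sum_pmfSupport, ← sum_erase_eq_sub hM, mul_sum, ← sum_neg_distrib, exp_sum]

lemma typeClass_subset_typ_of_rounding (hp : IsPMF p) (hn : n ≠ 0)
    (hε : ∀ a ∈ pmfSupport p, 1 ≤ ε * (n * p a)) {N : α → ℕ}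
    (hN : ∀ a ∈ pmfSupport p, N a = ⌊n * p a⌋₊ ∨ N a = ⌊n * p a⌋₊ + 1)
    (hN0 : ∀ a ∉ pmfSupport p, N a = 0) : typeClass n N ⊆ typ p n ε := by
  refine typeClass_subset_typ hn fun a => ?_
  by_cases ha : a ∈ pmfSupport p
  · have hle := Nat.floor_le (mul_nonneg n.cast_nonneg (hp.1 a))
    have hlt := Nat.lt_floor_add_one (n * p a)
    have hdist : |(N a : ℝ) - n * p a| ≤ 1 := by
      rw [abs_le]
      obtain hNa | hNa := hN a ha <;> rw [hNa] <;> push_cast <;> constructor <;> linarith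
    exact hdist.trans (hε a ha)
  · simp [hN0 a ha, hp.eq_zero_of_notMem_pmfSupport ha]

open scoped Nat in
lemma sqrt_mul_prod_le_sum_typ (hp : IsPMF p) (hn : n ≠ 0) (hε : 0 ≤ ε) (hε1 : ε ≤ 1)
    (h : ∀ a ∈ pmfSupport p, 4 / 3 ≤ ε ^ 2 * (n * p a)) :
    √(2 * π * n) * ∏ a ∈ pmfSupport p, 1 / (3 / 2 * exp 1 * √(n * p a))
      ≤ ∑ v ∈ typ p n ε, iid p n v := by
  have ht (a : α) : 0 ≤ n * p a := mul_nonneg n.cast_nonneg (hp.1 a)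
  have hεt (a : α) (ha : a ∈ pmfSupport p) : 4 / 3 ≤ ε * (n * p a) := by
    nlinarith [h a ha, mul_nonneg hε (ht a)]
  have ht' (a : α) (ha : a ∈ pmfSupport p) : 4 / 3 ≤ n * p a := by nlinarith [hεt a ha, ht a]
  obtain ⟨N, hNsum, hNfloor, hNzero⟩ := exists_nat_rounding (pmfSupport p)
    (t := fun a => n * p a) (n := n) (fun a _ => ht a)
    (by rw [← mul_sum, hp.sum_pmfSupport, mul_one])
  have hsub : typeClass n N ⊆ typ p n ε := typeClass_subset_typ_of_rounding hp hn
    (fun a ha => by linarith [hεt a ha]) hNfloor hNzero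
  have hNuniv : ∑ a, N a = n := hNsum ▸ (sum_subset (subset_univ _) fun a _ => hNzero a).symm
  calc √(2 * π * n) * ∏ a ∈ pmfSupport p, 1 / (3 / 2 * exp 1 * √(n * p a))
      ≤ √(2 * π * n) * ∏ a ∈ pmfSupport p, (exp (-(n * p a)) * (n * p a) ^ N a / (N a)!) :=
        mul_le_mul_of_nonneg_left (prod_le_prod (fun a _ => by positivity) fun a ha =>
          one_div_le_poisson (ht' a ha) (hNfloor a ha)) (sqrt_nonneg _)
    _ = √(2 * π * n) * ∏ a, (exp (-(n * p a)) * (n * p a) ^ N a / (N a)!) := by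
        congr 1
        refine prod_subset (subset_univ _) fun a _ ha => ?_
        simp [hNzero a ha, hp.eq_zero_of_notMem_pmfSupport ha]
    _ ≤ ∑ v ∈ typeClass n N, iid p n v := sqrt_mul_prod_poisson_le_sum_typeClass hp hNuniv
    _ ≤ ∑ v ∈ typ p n ε, iid p n v :=
        sum_le_sum_of_subset_of_nonneg hsub fun v _ _ => (hp.iid n).1 v

lemma exp_mul_prod_sqrt_le (hp : IsPMF p) (hε : 0 ≤ ε) (hε1 : ε ≤ 1) {C x : ℝ} (hC : 0 ≤ C)
    (hx : 1 ≤ x) (h : ∀ a ∈ pmfSupport p, x ≤ ε ^ 2 * (n * p a)) {M : α}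
    (hM : M ∈ pmfSupport p) :
    exp (-(ε * n * (1 - p M))) * ∏ a ∈ pmfSupport p, C * √(n * p a)
      ≤ C * (C * (√x * exp (-x))) ^ (#(pmfSupport p) - 1) * √n := by
  have hMn : n * p M ≤ n := mul_le_of_le_one_right n.cast_nonneg (hp.apply_le_one M)
  calc exp (-(ε * n * (1 - p M))) * ∏ a ∈ pmfSupport p, C * √(n * p a)
      = C * √(n * p M) *
          ∏ a ∈ (pmfSupport p).erase M, C * (√(n * p a) * exp (-(ε * (n * p a)))) := by
        rw [exp_neg_mul_one_sub_eq_prod hp hM, ← mul_prod_erase _ _ hM, mul_left_comm,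
          ← prod_mul_distrib]
        congr 1
        exact prod_congr rfl fun a _ => by ring_nf
    _ ≤ C * √n * (C * (√x * exp (-x))) ^ #((pmfSupport p).erase M) := by
        rw [← prod_const]
        gcongr ?_ * ∏ a ∈ _, C * ?_ with a ha
        · exact mul_le_mul_of_nonneg_left (sqrt_le_sqrt hMn) hC
        · exact sqrt_mul_exp_neg_le hx hε hε1 (h a (mem_of_mem_erase ha))
    _ = C * (C * (√x * exp (-x))) ^ (#(pmfSupport p) - 1) * √n := by
        rw [card_erase_of_mem hM]
        ring

lemma exp_mul_one_sub_le_sum_typ (hp : IsPMF p) (hn : n ≠ 0) (hε : 0 ≤ ε) (hε1 : ε ≤ 1)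
    {x : ℝ} (h : ∀ a ∈ pmfSupport p, x ≤ ε ^ 2 * (n * p a)) {M : α} (hM : M ∈ pmfSupport p)
    (hk : 2 ≤ #(pmfSupport p)) (hx : 2 * #(pmfSupport p) * exp (-x) < 1) :
    exp (-(ε * n * (1 - p M))) * (1 - 2 * #(pmfSupport p) * exp (-x))
      ≤ ∑ v ∈ typ p n ε, iid p n v := by
  set k := #(pmfSupport p)
  have hk' : (2 : ℝ) ≤ k := by exact_mod_cast hk
  have hx43 : 4 / 3 < x := four_thirds_lt_log_four.trans <|
    log_four_lt_of_four_mul_exp_neg_lt_one (by nlinarith [exp_pos (-x)])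
  have hpos : 0 < ∏ a ∈ pmfSupport p, 3 / 2 * exp 1 * √(n * p a) := prod_pos fun a ha => by
    have := mem_pmfSupport.mp ha
    positivity
  refine le_trans ?_ <| sqrt_mul_prod_le_sum_typ hp hn hε hε1 fun a ha => hx43.le.trans (h a ha)
  rw [prod_div_distrib, prod_const_one, mul_one_div, le_div_iff₀ hpos]
  calc exp (-(ε * n * (1 - p M))) * (1 - 2 * k * exp (-x))
        * ∏ a ∈ pmfSupport p, 3 / 2 * exp 1 * √(n * p a)
      = exp (-(ε * n * (1 - p M))) * (∏ a ∈ pmfSupport p, 3 / 2 * exp 1 * √(n * p a))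
        * (1 - 2 * k * exp (-x)) := by ring
    _ ≤ 3 / 2 * exp 1 * (3 / 2 * exp 1 * (√x * exp (-x))) ^ (k - 1) * √n
        * (1 - 2 * k * exp (-x)) := by
        refine mul_le_mul_of_nonneg_right ?_ (by linarith)
        exact exp_mul_prod_sqrt_le hp hε hε1 (by positivity) (by linarith) h hM
    _ = 3 / 2 * exp 1 * (3 / 2 * exp 1 * (√x * exp (-x))) ^ (k - 1)
        * (1 - 2 * k * exp (-x)) * √n := by ring
    _ ≤ √(2 * π) * √n := by gcongr; exact mul_pow_mul_one_sub_le_sqrt_two_pi hk hx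
    _ = √(2 * π * n) := (sqrt_mul (by positivity) _).symm

lemma ne_zero_of_two_mul_card_mul_exp_lt_one (hp : IsPMF p) {μ : ℝ}
    (h : 2 * #(pmfSupport p) * exp (-(n * ε ^ 2 * μ)) < 1) : n ≠ 0 := by
  rintro rfl
  have hcard : (1 : ℝ) ≤ #(pmfSupport p) := by exact_mod_cast hp.pmfSupport_nonempty.card_pos
  simp only [Nat.cast_zero, zero_mul, neg_zero, exp_zero] at h
  linarith

lemma one_le_two_rpow_div_or_exp_mul_one_sub_le_sum_typ (hp : IsPMF p) (hn : n ≠ 0) (hε : 0 ≤ ε)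
    {μ δ : ℝ} (hμ : ∀ a ∈ pmfSupport p, μ ≤ p a) {M : α} (hM : M ∈ pmfSupport p)
    (hδ : 2 * #(pmfSupport p) * exp (-(n * ε ^ 2 * μ)) ≤ δ) (hδ1 : δ < 1) :
    1 ≤ (2 : ℝ) ^ (-(n * (1 - ε) * Hsh p)) / (1 - δ) ∨
      ε ≤ 1 ∧ exp (-(ε * n * (1 - p M))) * (1 - δ) ≤ ∑ v ∈ typ p n ε, iid p n v := by
  obtain hH | ⟨hε1, hk⟩ : n * (1 - ε) * Hsh p ≤ 0 ∨ ε < 1 ∧ 2 ≤ #(pmfSupport p) := by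
    obtain hε1 | hε1 := le_or_gt 1 ε
    · have hbase : n * (1 - ε) ≤ 0 := mul_nonpos_of_nonneg_of_nonpos n.cast_nonneg (by linarith)
      exact .inl (mul_nonpos_of_nonpos_of_nonneg hbase hp.Hsh_nonneg)
    obtain hk | hk := le_or_gt #(pmfSupport p) 1
    · exact .inl (by rw [hp.Hsh_eq_zero_of_card_pmfSupport_le_one hk, mul_zero])
    · exact .inr ⟨hε1, hk⟩
  · have hδ0 : 0 ≤ δ := le_trans (by positivity) hδ
    have hrpow : (1 : ℝ) ≤ 2 ^ (-(n * (1 - ε) * Hsh p)) :=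
      one_le_rpow one_le_two (neg_nonneg.mpr hH)
    left
    rw [le_div_iff₀ (sub_pos.mpr hδ1)]
    linarith
  · have hx (a : α) (ha : a ∈ pmfSupport p) : n * ε ^ 2 * μ ≤ ε ^ 2 * (n * p a) := by
      rw [mul_comm (n : ℝ), mul_assoc]
      gcongr
      exact hμ a ha
    refine .inr ⟨hε1.le, le_trans ?_ <|
      exp_mul_one_sub_le_sum_typ hp hn hε hε1.le hx hM hk (hδ.trans_lt hδ1)⟩
    gcongr

end Source

section Encoder

variable {α : Type*} [Fintype α] [DecidableEq α] {P : α → ℝ} {T : Finset α} {e : Fin #T ≃ T}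

/-- The output distribution of the encoder that sends `e m ∈ T` to its index `m` and replaces an
input outside `T` by an independent uniform seed `u : Fin #T`, for an input of distribution `P`. -/
def encoderOutput (P : α → ℝ) (T : Finset α) (e : Fin #T ≃ T) (m : Fin #T) : ℝ :=
  ∑ v, ∑ u : Fin #T, P v * (1 / (#T : ℝ)) *
    (if (if h : v ∈ T then e.symm ⟨v, h⟩ else u) = m then 1 else 0)

lemma encoderOutput_eq (m : Fin #T) :
    encoderOutput P T e m = P (e m) + (∑ v ∈ Tᶜ, P v) / #T := by
  have hT : (#T : ℝ) ≠ 0 := Nat.cast_ne_zero.mpr m.pos.ne'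
  rw [encoderOutput, ← sum_add_sum_compl T, sum_div]
  congr 1
  · rw [sum_eq_single_of_mem (e m : α) (e m).2 fun v hv hne => ?_]
    · simp only [SetLike.coe_mem, ↓reduceDIte, Subtype.coe_eta, Equiv.symm_apply_apply, ↓reduceIte,
        mul_one, sum_const, card_univ, Fintype.card_fin, nsmul_eq_mul]
      field_simp
    · have hvm : e.symm ⟨v, hv⟩ ≠ m := fun h => hne (by simp [← h])
      simp [hv, hvm]
  · refine sum_congr rfl fun v hv => ?_
    simp [mem_compl.mp hv, div_eq_mul_inv]

lemma IsPMF.encoderOutput (hP : IsPMF P) (hT : T.Nonempty) : IsPMF (encoderOutput P T e) := by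
  have hcard : (#T : ℝ) ≠ 0 := Nat.cast_ne_zero.mpr hT.card_ne_zero
  constructor
  · intro m
    rw [encoderOutput_eq]
    exact add_nonneg (hP.1 _) (div_nonneg (sum_nonneg fun v _ => hP.1 v) (Nat.cast_nonneg _))
  · simp only [encoderOutput_eq, sum_add_distrib, sum_const, card_univ, Fintype.card_fin,
      nsmul_eq_mul, mul_div_cancel₀ _ hcard]
    rw [Equiv.sum_comp e fun v => P v, sum_coe_sort T P, sum_add_sum_compl, hP.2]

lemma encoderOutput_le_div (hP : IsPMF P) {q : ℝ} (hq : ∀ v ∈ T, P v ≤ q)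
    (hT : 0 < ∑ v ∈ T, P v) (m : Fin #T) : encoderOutput P T e m ≤ q / ∑ v ∈ T, P v := by
  have hcard : 0 < (#T : ℝ) := Nat.cast_pos.mpr m.pos
  have hsum : ∑ v ∈ T, P v ≤ #T * q := by
    simpa only [nsmul_eq_mul] using sum_le_card_nsmul T P q hq
  have hseed : 1 / (#T : ℝ) ≤ q / ∑ v ∈ T, P v := by
    rwa [div_le_div_iff₀ hcard hT, one_mul, mul_comm q]
  have hcompl : ∑ v ∈ Tᶜ, P v = 1 - ∑ v ∈ T, P v := by
    rw [← hP.2, ← sum_add_sum_compl T, add_sub_cancel_left]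
  have hcompl0 : 0 ≤ ∑ v ∈ Tᶜ, P v := sum_nonneg fun v _ => hP.1 v
  calc encoderOutput P T e m = P (e m) + (∑ v ∈ Tᶜ, P v) / #T := encoderOutput_eq m
    _ ≤ q + (∑ v ∈ Tᶜ, P v) * (q / ∑ v ∈ T, P v) := by
        rw [div_eq_mul_one_div (∑ v ∈ Tᶜ, P v)]
        exact add_le_add (hq _ (e m).2) (mul_le_mul_of_nonneg_left hseed hcompl0)
    _ = q / ∑ v ∈ T, P v := by
        rw [hcompl]
        field_simp
        ring

lemma neg_logb_le_Hinf_encoderOutput (hP : IsPMF P) {b : ℝ} (hT : T = ∅ → 1 ≤ b)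
    (hb : ∀ m, encoderOutput P T e m ≤ b) : -logb 2 b ≤ Hinf (encoderOutput P T e) := by
  obtain rfl | hTne := T.eq_empty_or_nonempty
  · have : IsEmpty (Fin #(∅ : Finset α)) := by rw [card_empty]; infer_instance
    rw [Hinf, Real.iSup_of_isEmpty, logb_zero]
    exact neg_le_neg (logb_nonneg one_lt_two (hT rfl))
  · exact (hP.encoderOutput hTne).neg_logb_le_Hinf hb

variable {V : Type*} [Fintype V] {p : V → ℝ} {n : ℕ} {ε δ : ℝ}

lemma encoderOutput_typ_le (hp : IsPMF p) (hn : n ≠ 0) (hε : 0 ≤ ε) (hε1 : ε ≤ 1) {b : ℝ}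
    (hb : ∀ a, p a ≤ b) (hδ : δ < 1)
    (hmass : exp (-(ε * n * (1 - b))) * (1 - δ) ≤ ∑ v ∈ typ p n ε, iid p n v)
    {e : Fin #(typ p n ε) ≃ typ p n ε} (m : Fin #(typ p n ε)) :
    encoderOutput (iid p n) (typ p n ε) e m
      ≤ (2 : ℝ) ^ (-(n * (1 - ε) * Hsh p)) / (1 - δ) := by
  have hδ' : 0 < 1 - δ := sub_pos.mpr hδ
  have hmass_pos : 0 < ∑ v ∈ typ p n ε, iid p n v := lt_of_lt_of_le (by positivity) hmass
  obtain ⟨a, ha⟩ := hp.exists_pos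
  have hslack : b ^ (ε * n) ≤ exp (-(ε * n * (1 - b))) :=
    rpow_le_exp_neg_mul_one_sub (ha.le.trans (hb a)) (by positivity)
  calc encoderOutput (iid p n) (typ p n ε) e m
      ≤ (2 : ℝ) ^ (-(n * (1 - ε) * Hsh p)) * exp (-(ε * n * (1 - b)))
          / ∑ v ∈ typ p n ε, iid p n v :=
        encoderOutput_le_div (hp.iid n) (fun v hv => (iid_le_of_mem_typ hp hn hε1 hb hv).trans
          (mul_le_mul_of_nonneg_left hslack (by positivity))) hmass_pos m
    _ ≤ (2 : ℝ) ^ (-(n * (1 - ε) * Hsh p)) / (1 - δ) := by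
        rw [div_le_div_iff₀ hmass_pos hδ', mul_assoc]
        gcongr

end Encoder

/-- typical-sequence-based encoder has nearly uniform output:
pointwise bound on the output pmf and min-entropy lower bound. -/
theorem statement18 {V : Type*} [Fintype V] (pV : V → ℝ) (hV : IsPMF pV)
    (n : ℕ) (ε₀ : ℝ) (hε₀ : 0 < ε₀)
    (μ δ : ℝ)
    (hμ : μ = sInf {r : ℝ | ∃ v, 0 < pV v ∧ r = pV v})
    (hδ : δ = 2 * (Fintype.card V : ℝ) * Real.exp (-((n : ℝ) * ε₀ ^ 2 * μ)))
    (hδ1 : δ < 1)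
    -- enumeration of the typical set
    (e : Fin (typ pV n ε₀).card ≃ (typ pV n ε₀)) :
    -- pointwise bound: `p_{f_n(V^n)}(m) ≤ 2^{-n(1-ε₀)H(V)}/(1-δ)`
    (∀ m : Fin (typ pV n ε₀).card,
      (∑ v : Fin n → V, ∑ u : Fin (typ pV n ε₀).card,
          iid pV n v * (1 / ((typ pV n ε₀).card : ℝ)) *
            (if (if h : v ∈ typ pV n ε₀ then e.symm ⟨v, h⟩ else u) = m then 1 else 0))
        ≤ (2:ℝ) ^ (-((n : ℝ) * (1 - ε₀) * Hsh pV)) / (1 - δ)) ∧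
    -- min-entropy bound: `H_∞(f_n(V^n)) ≥ n(1-ε₀)H(V) + log(1-δ)`
    (n : ℝ) * (1 - ε₀) * Hsh pV + Real.logb 2 (1 - δ)
      ≤ Hinf (fun m : Fin (typ pV n ε₀).card =>
          ∑ v : Fin n → V, ∑ u : Fin (typ pV n ε₀).card,
            iid pV n v * (1 / ((typ pV n ε₀).card : ℝ)) *
              (if (if h : v ∈ typ pV n ε₀ then e.symm ⟨v, h⟩ else u) = m then 1 else 0)) := by
  obtain ⟨M, hM, hM_max⟩ := hV.exists_mem_pmfSupport_forall_le
  have hsupp : 2 * #(pmfSupport pV) * exp (-(n * ε₀ ^ 2 * μ)) ≤ δ := by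
    rw [hδ]
    gcongr
    exact card_le_univ _
  have hn := ne_zero_of_two_mul_card_mul_exp_lt_one hV (hsupp.trans_lt hδ1)
  have hcases := one_le_two_rpow_div_or_exp_mul_one_sub_le_sum_typ hV hn hε₀.le
    (fun a ha => hμ ▸ sInf_pos_le_of_mem_pmfSupport ha) hM hsupp hδ1
  have hδ' : 0 < 1 - δ := sub_pos.mpr hδ1
  have hbound (m) : encoderOutput (iid pV n) (typ pV n ε₀) e m
      ≤ (2 : ℝ) ^ (-(n * (1 - ε₀) * Hsh pV)) / (1 - δ) := by
    obtain hone | ⟨hε₁, hmass⟩ := hcases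
    · exact (((hV.iid n).encoderOutput (card_pos.mp m.pos)).apply_le_one m).trans hone
    · exact encoderOutput_typ_le hV hn hε₀.le hε₁ hM_max hδ1 hmass m
  have hempty (hT : typ pV n ε₀ = ∅) : 1 ≤ (2 : ℝ) ^ (-(n * (1 - ε₀) * Hsh pV)) / (1 - δ) := by
    refine hcases.resolve_right fun ⟨_, hmass⟩ => hmass.not_gt ?_
    rw [hT, sum_empty]
    positivity
  refine ⟨hbound, ?_⟩
  rw [← neg_logb_two_rpow_neg_div _ hδ'.ne']
  exact neg_logb_le_Hinf_encoderOutput (hV.iid n) hempty hbound
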